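/- For every g = (q, p) with q ∈ ℝ⁴, ‖q‖ = 1, and qᵀp = 0, define g⁻¹ = (q⁻¹, p⁻¹), where q⁻¹ = (q₀, −q⃗) and p⁻¹ = (p₀, −p⃗). Then g · g⁻¹ = g⁻¹ · g = (1̄, 0), where · is the binary operation on TS³ defined below. -/

import Mathlib

open Matrix

noncomputable section

/-- Cross-product (hat) matrix of a 3-vector: `vecHat v *ᵥ u = v ×₃ u`. -/
def vecHat (v : Fin 3 → ℝ) : Matrix (Fin 3) (Fin 3) ℝ :=
  !![0, -v 2, v 1; v 2, 0, -v 0; -v 1, v 0, 0]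

/-- The 4×3 matrix J(x): first row −x⃗ᵀ, lower 3×3 block x₀I₃ + x⃗^∧. -/
def Jmat (x : Fin 4 → ℝ) : Matrix (Fin 4) (Fin 3) ℝ :=
  Matrix.of fun i j =>
    if h : i = 0 then -x j.succ
    else (x 0 • (1 : Matrix (Fin 3) (Fin 3) ℝ) + vecHat fun k => x k.succ) (i.pred h) j

/-- The 4×3 matrix L(x): first row −x⃗ᵀ, lower 3×3 block x₀I₃ − x⃗^∧. -/
def Lmat (x : Fin 4 → ℝ) : Matrix (Fin 4) (Fin 3) ℝ :=
  Matrix.of fun i j =>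
    if h : i = 0 then -x j.succ
    else (x 0 • (1 : Matrix (Fin 3) (Fin 3) ℝ) - vecHat fun k => x k.succ) (i.pred h) j

/-- The 4×4 matrix Q(x) = [x J(x)] (first column x, remaining columns J(x)). -/
def Qmat (x : Fin 4 → ℝ) : Matrix (Fin 4) (Fin 4) ℝ :=
  Matrix.of fun i j => if h : j = 0 then x i else Jmat x i (j.pred h)

/-- The 4×4 matrix W(x) = [x L(x)] (first column x, remaining columns L(x)). -/
def Wmat (x : Fin 4 → ℝ) : Matrix (Fin 4) (Fin 4) ℝ :=
  Matrix.of fun i j => if h : j = 0 then x i else Lmat x i (j.pred h)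

/-- Euclidean norm on ℝ⁴: ‖x‖ = (xᵀx)^{1/2}. -/
def norm4 (x : Fin 4 → ℝ) : ℝ := Real.sqrt (x ⬝ᵥ x)

/-- The identity quaternion 1̄ = (1,0,0,0) ∈ ℝ⁴. -/
def one4 : Fin 4 → ℝ := ![1, 0, 0, 0]

/-- The binary operation on TS³ from Eq. (12) of the paper (with parameter λ). -/
def gmul (lam : ℝ) (g₁ g₂ : (Fin 4 → ℝ) × (Fin 4 → ℝ)) : (Fin 4 → ℝ) × (Fin 4 → ℝ) :=
  (Qmat g₁.1 *ᵥ g₂.1,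
    Qmat g₁.1 *ᵥ g₂.2 + Wmat g₂.1 *ᵥ g₁.2
      + lam • (Qmat g₁.1 *ᵥ (g₂.1 0 • g₂.1 - one4))
      + lam • (Wmat g₂.1 *ᵥ (g₁.1 0 • g₁.1 - one4))
      - lam • ((Qmat g₁.1 *ᵥ g₂.1) 0 • (Qmat g₁.1 *ᵥ g₂.1) - one4))

/-- Quaternion-style conjugation on ℝ⁴: (x₀, x⃗) ↦ (x₀, −x⃗). -/
def qconj (x : Fin 4 → ℝ) : Fin 4 → ℝ := fun i => if i = 0 then x i else -x i

/-!
Identify ℝ⁴ with the quaternions, so that `Q(x) y = x y` and `W(x) y = y x`. The map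
`(q, p) ↦ q + ε (p + λ (q₀ q - 1))` into the dual quaternions is injective and turns the operation
on `TS³` into multiplication: the terms in `λ` are exactly the transport of the product
`(q₁ + ε a₁) (q₂ + ε a₂) = q₁ q₂ + ε (q₁ a₂ + a₁ q₂)` along this shift of the dual part.
It sends `(1̄, 0)` to `1` and `(q̄, p̄)` to the conjugate of the image of `(q, p)`. Finally
`(q + ε a) (q̄ + ε ā) = |q|² + 2 ε ⟨q, a⟩`, and the shift does not change `⟨q, a⟩` when `|q| = 1`,
since `⟨q, q₀ q - 1⟩ = q₀ (|q|² - 1)`. Hence points of `TS³` become unit dual quaternions, whose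
inverse is their conjugate.
-/

open TrivSqZeroExt
open scoped Quaternion DualNumber

section DualQuaternion

variable {R : Type*} [CommRing R]

/-- The conjugate `ā + ε b̄` of a dual quaternion `a + ε b`, which inverts unit dual quaternions.
Unlike some other conjugations of dual quaternions, it fixes `ε`. -/
def dualConj (d : ℍ[R][ε]) : ℍ[R][ε] := inl (star d.fst) + inr (star d.snd)

lemma fst_dualConj (d : ℍ[R][ε]) : (dualConj d).fst = star d.fst := by simp [dualConj]

lemma snd_dualConj (d : ℍ[R][ε]) : (dualConj d).snd = star d.snd := by simp [dualConj]

lemma re_star_mul (a b : ℍ[R]) : (star a * b).re = (a * star b).re := by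
  simp only [Quaternion.re_mul, Quaternion.re_star, Quaternion.imI_star, Quaternion.imJ_star,
    Quaternion.imK_star]
  ring

lemma mul_star_add_mul_star (a b : ℍ[R]) :
    a * star b + b * star a = ↑(2 * (a * star b).re) := by
  rw [← Quaternion.self_add_star', star_mul, star_star]

lemma self_mul_dualConj (d : ℍ[R][ε]) :
    d * dualConj d =
      inl (↑(Quaternion.normSq d.fst) : ℍ[R]) + inr (↑(2 * (d.fst * star d.snd).re) : ℍ[R]) := by
  rw [← Quaternion.self_mul_star, ← mul_star_add_mul_star]
  apply TrivSqZeroExt.ext <;> simp [fst_dualConj, snd_dualConj]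

lemma dualConj_dualConj (d : ℍ[R][ε]) : dualConj (dualConj d) = d := by
  apply TrivSqZeroExt.ext <;> simp only [fst_dualConj, snd_dualConj, star_star]

lemma dualConj_comm_self (d : ℍ[R][ε]) : dualConj d * d = d * dualConj d := by
  calc dualConj d * d = dualConj d * dualConj (dualConj d) := by rw [dualConj_dualConj]
    _ = d * dualConj d := by
      rw [self_mul_dualConj, self_mul_dualConj, fst_dualConj, snd_dualConj, Quaternion.normSq_star,
        star_star, re_star_mul]

end DualQuaternion

/-- The identification of `ℝ⁴` with the quaternions, `x ↦ x₀ + x₁ i + x₂ j + x₃ k`. -/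
def toQuaternion : (Fin 4 → ℝ) ≃ₗ[ℝ] ℍ[ℝ] :=
  (QuaternionAlgebra.linearEquivTuple (-1 : ℝ) 0 (-1)).symm

@[simp] lemma re_toQuaternion (x : Fin 4 → ℝ) : (toQuaternion x).re = x 0 := rfl

@[simp] lemma imI_toQuaternion (x : Fin 4 → ℝ) : (toQuaternion x).imI = x 1 := rfl

@[simp] lemma imJ_toQuaternion (x : Fin 4 → ℝ) : (toQuaternion x).imJ = x 2 := rfl

@[simp] lemma imK_toQuaternion (x : Fin 4 → ℝ) : (toQuaternion x).imK = x 3 := rfl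

lemma toQuaternion_one4 : toQuaternion one4 = 1 := rfl

lemma toQuaternion_qconj (x : Fin 4 → ℝ) : toQuaternion (qconj x) = star (toQuaternion x) := by
  ext <;> simp [qconj]

lemma Qmat_eq (x : Fin 4 → ℝ) :
    Qmat x =
      !![x 0, -x 1, -x 2, -x 3;
         x 1,  x 0, -x 3,  x 2;
         x 2,  x 3,  x 0, -x 1;
         x 3, -x 2,  x 1,  x 0] := by
  ext i j
  fin_cases i <;> fin_cases j <;>
    simp [Qmat, Jmat, vecHat, Fin.pred, Fin.subNat, Matrix.one_apply]

lemma Wmat_eq (x : Fin 4 → ℝ) :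
    Wmat x =
      !![x 0, -x 1, -x 2, -x 3;
         x 1,  x 0,  x 3, -x 2;
         x 2, -x 3,  x 0,  x 1;
         x 3,  x 2, -x 1,  x 0] := by
  ext i j
  fin_cases i <;> fin_cases j <;>
    simp [Wmat, Lmat, vecHat, Fin.pred, Fin.subNat, Matrix.one_apply]

lemma toQuaternion_Qmat_mulVec (x y : Fin 4 → ℝ) :
    toQuaternion (Qmat x *ᵥ y) = toQuaternion x * toQuaternion y := by
  ext <;>
    simp only [re_toQuaternion, imI_toQuaternion, imJ_toQuaternion, imK_toQuaternion,
      Quaternion.re_mul, Quaternion.imI_mul, Quaternion.imJ_mul, Quaternion.imK_mul, Qmat_eq,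
      Matrix.mulVec, dotProduct, Fin.sum_univ_four, Matrix.of_apply, Matrix.cons_val] <;>
    ring

lemma toQuaternion_Wmat_mulVec (x y : Fin 4 → ℝ) :
    toQuaternion (Wmat x *ᵥ y) = toQuaternion y * toQuaternion x := by
  ext <;>
    simp only [re_toQuaternion, imI_toQuaternion, imJ_toQuaternion, imK_toQuaternion,
      Quaternion.re_mul, Quaternion.imI_mul, Quaternion.imJ_mul, Quaternion.imK_mul, Wmat_eq,
      Matrix.mulVec, dotProduct, Fin.sum_univ_four, Matrix.of_apply, Matrix.cons_val] <;>
    ring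

lemma re_toQuaternion_mul_star (x y : Fin 4 → ℝ) :
    (toQuaternion x * star (toQuaternion y)).re = x ⬝ᵥ y := by
  simp [dotProduct, Fin.sum_univ_four]

lemma normSq_toQuaternion (x : Fin 4 → ℝ) : Quaternion.normSq (toQuaternion x) = x ⬝ᵥ x := by
  rw [Quaternion.normSq_def, re_toQuaternion_mul_star]

lemma dotProduct_one4 (x : Fin 4 → ℝ) : x ⬝ᵥ one4 = x 0 := by
  simp [one4, dotProduct, Fin.sum_univ_four]

/-- The dual quaternion `q + ε (p + λ (q₀ q - 1))` attached to `(q, p)`. The shift of the dual part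
by `λ (q₀ q - 1)` is what makes `gmul lam` correspond to multiplication. -/
def toDualQuaternion (lam : ℝ) (g : (Fin 4 → ℝ) × (Fin 4 → ℝ)) : ℍ[ℝ][ε] :=
  inl (toQuaternion g.1) + inr (toQuaternion (g.2 + lam • (g.1 0 • g.1 - one4)))

section ToDualQuaternion

variable (lam : ℝ)

lemma fst_toDualQuaternion (g : (Fin 4 → ℝ) × (Fin 4 → ℝ)) :
    (toDualQuaternion lam g).fst = toQuaternion g.1 := by
  simp [toDualQuaternion]

lemma snd_toDualQuaternion (g : (Fin 4 → ℝ) × (Fin 4 → ℝ)) :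
    (toDualQuaternion lam g).snd = toQuaternion (g.2 + lam • (g.1 0 • g.1 - one4)) := by
  simp [toDualQuaternion]

lemma toDualQuaternion_injective : Function.Injective (toDualQuaternion lam) := by
  rintro ⟨q, p⟩ ⟨q', p'⟩ h
  have hfst := congrArg TrivSqZeroExt.fst h
  have hsnd := congrArg TrivSqZeroExt.snd h
  rw [fst_toDualQuaternion, fst_toDualQuaternion] at hfst
  rw [snd_toDualQuaternion, snd_toDualQuaternion] at hsnd
  obtain rfl : q = q' := toQuaternion.injective hfst
  obtain rfl : p = p' := add_right_cancel (toQuaternion.injective hsnd)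
  rfl

lemma toDualQuaternion_one4_zero : toDualQuaternion lam (one4, 0) = 1 := by
  have hshift : one4 0 • one4 - one4 = 0 := by simp [one4]
  rw [toDualQuaternion, hshift, smul_zero, add_zero, map_zero, toQuaternion_one4, inl_one,
    inr_zero, add_zero]

lemma toDualQuaternion_gmul (g₁ g₂ : (Fin 4 → ℝ) × (Fin 4 → ℝ)) :
    toDualQuaternion lam (gmul lam g₁ g₂) =
      toDualQuaternion lam g₁ * toDualQuaternion lam g₂ := by
  apply TrivSqZeroExt.ext
  · simp only [fst_mul, fst_toDualQuaternion, gmul, toQuaternion_Qmat_mulVec]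
  · simp only [DualNumber.snd_mul, fst_toDualQuaternion, snd_toDualQuaternion, gmul,
      sub_add_cancel, map_add, map_smul, toQuaternion_Qmat_mulVec, toQuaternion_Wmat_mulVec,
      mul_add, add_mul, mul_smul_comm, smul_mul_assoc]
    abel

lemma toDualQuaternion_qconj (q p : Fin 4 → ℝ) :
    toDualQuaternion lam (qconj q, qconj p) = dualConj (toDualQuaternion lam (q, p)) := by
  have hre : qconj q 0 = q 0 := rfl
  apply TrivSqZeroExt.ext
  · rw [fst_dualConj, fst_toDualQuaternion, fst_toDualQuaternion, toQuaternion_qconj]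
  · simp only [snd_dualConj, snd_toDualQuaternion, hre, map_add, map_smul, map_sub,
      toQuaternion_qconj, toQuaternion_one4, star_add, Quaternion.star_smul, star_sub, star_one]

lemma toDualQuaternion_mul_dualConj_eq_one {q p : Fin 4 → ℝ} (hq : q ⬝ᵥ q = 1) (hp : q ⬝ᵥ p = 0) :
    toDualQuaternion lam (q, p) * dualConj (toDualQuaternion lam (q, p)) = 1 := by
  have hshift : q ⬝ᵥ (p + lam • (q 0 • q - one4)) = 0 := by
    rw [dotProduct_add, dotProduct_smul, dotProduct_sub, dotProduct_smul, dotProduct_one4, hq, hp,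
      smul_eq_mul, smul_eq_mul, mul_one, sub_self, mul_zero, add_zero]
  rw [self_mul_dualConj, fst_toDualQuaternion, snd_toDualQuaternion, normSq_toQuaternion,
    re_toQuaternion_mul_star, hq, hshift, mul_zero,
    Quaternion.coe_one, Quaternion.coe_zero, inl_one, inr_zero, add_zero]

end ToDualQuaternion

/-- g⁻¹ = ((q₀, −q⃗), (p₀, −p⃗)) is a two-sided inverse of g = (q, p) ∈ TS³. -/
theorem stmt14 (lam : ℝ) (hlam : 0 < lam) (q p : Fin 4 → ℝ)
    (hq : norm4 q = 1) (hp : q ⬝ᵥ p = 0) :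
    gmul lam (q, p) (qconj q, qconj p) = (one4, 0) ∧
    gmul lam (qconj q, qconj p) (q, p) = (one4, 0) := by
  have hunit := toDualQuaternion_mul_dualConj_eq_one lam (Real.sqrt_eq_one.mp hq) hp
  constructor <;> apply toDualQuaternion_injective lam
  · rw [toDualQuaternion_gmul, toDualQuaternion_qconj, hunit, toDualQuaternion_one4_zero]
  · rw [toDualQuaternion_gmul, toDualQuaternion_qconj, dualConj_comm_self, hunit,
      toDualQuaternion_one4_zero]
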